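/- Let A be a linear relation in a complex vector space H, let λ_1, …, λ_l ∈ ℂ be pairwise distinct, and suppose x^1, …, x^l ∈ H satisfy x^r ∈ R_{λ_r}(A) for r = 1, …, l and Σ_{r=1}^{l} x^r ∈ R_∞(A). Then x^r ∈ R_c(A) for every r = 1, …, l. -/

import Mathlib

/-!
The idea is to turn the relation `A` into an honest operator by passing to a quotient.

Modulo `R_∞(A)` the relation is single-valued: if `(x, y) ∈ A` and `x ∈ R_∞(A)` then
`y ∈ R_∞(A)`. Hence there is an endomorphism `T` of `H / R_∞(A)` with `T [x] = [y]` whenever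
`(x, y) ∈ A` (extend linearly off the domain). The class of a vector in `R_λ(A)` is a generalized
eigenvector of `T` at `λ`, and generalized eigenspaces at distinct points are independent, so
`∑ x^r ∈ R_∞(A)` forces every `x^r` into `R_∞(A)` (`mem_rootInf_of_sum_mem`).

It remains to see that `R_λ(A) ∩ R_∞(A) ⊆ R_0(A)` (`mem_rootSpace_zero`). Dually, modulo `R_0(A)`
the inverse of `A` is single-valued, which gives an endomorphism `S` of `H / R_0(A)` with
`S [y] = [x]` whenever `(x, y) ∈ A`. A vector of `R_∞(A)` is annihilated by a power of `S`, a vector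
of `R_λ(A)` by a power of `1 - λ S`; for `λ ≠ 0` these are generalized eigenspaces of `S` at `0`
and at `1 / λ`, which meet only in `0`.
-/

open Submodule Set

variable {H : Type*} [AddCommGroup H] [Module ℂ H]

/-- A linear relation in `H`: a linear subspace of the product `H × H`. -/
abbrev LinRel (H : Type*) [AddCommGroup H] [Module ℂ H] : Type _ := Submodule ℂ (H × H)

namespace LinRel

/-- The relation `A - λ = {(x, y - λ x) : (x,y) ∈ A}`. -/
def shift (A : LinRel H) (lam : ℂ) : LinRel H :=
  A.map ((LinearMap.fst ℂ H H).prod (LinearMap.snd ℂ H H - lam • LinearMap.fst ℂ H H))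

/-- The relation `λ A = {(x, λ y) : (x,y) ∈ A}`. -/
def smulRel (lam : ℂ) (A : LinRel H) : LinRel H :=
  A.map ((LinearMap.fst ℂ H H).prod (lam • LinearMap.snd ℂ H H))

/-- The inverse relation `A⁻¹ = {(y,x) : (x,y) ∈ A}`. -/
def inv (A : LinRel H) : LinRel H :=
  A.map ((LinearMap.snd ℂ H H).prod (LinearMap.fst ℂ H H))

/-- The product (composition) `A B = {(x,y) : ∃ z, (x,z) ∈ B ∧ (z,y) ∈ A}`. -/
def comp (A B : LinRel H) : LinRel H where
  carrier := {p | ∃ z, (p.1, z) ∈ B ∧ (z, p.2) ∈ A}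
  zero_mem' := ⟨0, B.zero_mem, A.zero_mem⟩
  add_mem' := by
    rintro p q ⟨z1, h1, h2⟩ ⟨z2, h3, h4⟩
    exact ⟨z1 + z2, B.add_mem h1 h3, A.add_mem h2 h4⟩
  smul_mem' := by
    rintro c p ⟨z, h1, h2⟩
    exact ⟨c • z, B.smul_mem c h1, A.smul_mem c h2⟩

/-- The identity relation `I = {(x,x) : x ∈ H}`. -/
def idRel : LinRel H := LinearMap.graph (LinearMap.id : H →ₗ[ℂ] H)

/-- Powers: `A⁰ = I` and `Aᵏ = A · Aᵏ⁻¹`. -/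
def pow (A : LinRel H) : ℕ → LinRel H
  | 0 => idRel
  | (k+1) => comp A (pow A k)

/-- The kernel `ker A = {x : (x,0) ∈ A}`. -/
def ker (A : LinRel H) : Submodule ℂ H := A.comap (LinearMap.inl ℂ H H)

/-- The multivalued part `mul A = {y : (0,y) ∈ A}`. -/
def mul (A : LinRel H) : Submodule ℂ H := A.comap (LinearMap.inr ℂ H H)

lemma mem_ker {A : LinRel H} {x : H} : x ∈ ker A ↔ (x, (0:H)) ∈ A := by
  simp [ker, Submodule.mem_comap]

lemma mem_mul {A : LinRel H} {y : H} : y ∈ mul A ↔ ((0:H), y) ∈ A := by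
  simp [mul, Submodule.mem_comap]

lemma ker_pow_le_succ (A : LinRel H) (i : ℕ) : ker (pow A i) ≤ ker (pow A (i+1)) := by
  intro x hx
  rw [mem_ker] at hx ⊢
  exact ⟨0, hx, A.zero_mem⟩

lemma ker_pow_mono (A : LinRel H) : Monotone fun i => ker (pow A i) :=
  monotone_nat_of_le_succ (ker_pow_le_succ A)

lemma mul_pow_le_succ (A : LinRel H) : ∀ i, mul (pow A i) ≤ mul (pow A (i+1)) := by
  intro i
  induction i with
  | zero =>
    intro y hy
    rw [mem_mul] at hy ⊢
    have : y = 0 := by simpa [pow, idRel, LinearMap.mem_graph_iff] using hy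
    subst this
    exact Submodule.zero_mem _
  | succ i ih =>
    intro y hy
    rw [mem_mul] at hy ⊢
    obtain ⟨w, hw, hwy⟩ := hy
    exact ⟨w, mem_mul.mp (ih (mem_mul.mpr hw)), hwy⟩

lemma mul_pow_mono (A : LinRel H) : Monotone fun i => mul (pow A i) :=
  monotone_nat_of_le_succ (mul_pow_le_succ A)

/-- The root space `R_λ(A) = ⋃_{i ≥ 1} ker (A - λ)ⁱ`. -/
def rootSpace (A : LinRel H) (lam : ℂ) : Submodule ℂ H where
  carrier := ⋃ i : ℕ, (ker (pow (shift A lam) (i+1)) : Set H)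
  zero_mem' := Set.mem_iUnion.2 ⟨0, Submodule.zero_mem _⟩
  add_mem' := by
    intro a b ha hb
    obtain ⟨i, hi⟩ := Set.mem_iUnion.1 ha
    obtain ⟨j, hj⟩ := Set.mem_iUnion.1 hb
    exact Set.mem_iUnion.2 ⟨max i j, Submodule.add_mem _
      (ker_pow_mono _ (by omega : i + 1 ≤ max i j + 1) hi)
      (ker_pow_mono _ (by omega : j + 1 ≤ max i j + 1) hj)⟩
  smul_mem' := by
    intro c a ha
    obtain ⟨i, hi⟩ := Set.mem_iUnion.1 ha
    exact Set.mem_iUnion.2 ⟨i, Submodule.smul_mem _ c hi⟩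

/-- The root space at infinity `R_∞(A) = ⋃_{i ≥ 1} mul Aⁱ`. -/
def rootInf (A : LinRel H) : Submodule ℂ H where
  carrier := ⋃ i : ℕ, (mul (pow A (i+1)) : Set H)
  zero_mem' := Set.mem_iUnion.2 ⟨0, Submodule.zero_mem _⟩
  add_mem' := by
    intro a b ha hb
    obtain ⟨i, hi⟩ := Set.mem_iUnion.1 ha
    obtain ⟨j, hj⟩ := Set.mem_iUnion.1 hb
    exact Set.mem_iUnion.2 ⟨max i j, Submodule.add_mem _
      (mul_pow_mono _ (by omega : i + 1 ≤ max i j + 1) hi)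
      (mul_pow_mono _ (by omega : j + 1 ≤ max i j + 1) hj)⟩
  smul_mem' := by
    intro c a ha
    obtain ⟨i, hi⟩ := Set.mem_iUnion.1 ha
    exact Set.mem_iUnion.2 ⟨i, Submodule.smul_mem _ c hi⟩

/-- The singular chain space `R_c(A) = R_0(A) ∩ R_∞(A)`. -/
def singChain (A : LinRel H) : Submodule ℂ H := rootSpace A 0 ⊓ rootInf A

/-- The root space at a point of `ℂ ∪ {∞}` (modelled as `Option ℂ`, with `none = ∞`). -/
def rootSpaceE (A : LinRel H) : Option ℂ → Submodule ℂ H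
  | none => rootInf A
  | some lam => rootSpace A lam

/-- `λ ∈ ℂ ∪ {∞}` is an eigenvalue of `A`. -/
def isEigenvalue (A : LinRel H) : Option ℂ → Prop
  | none => mul A ≠ ⊥
  | some lam => ker (shift A lam) ≠ ⊥

end LinRel
namespace LinRel

lemma mem_shift {A : LinRel H} {lam : ℂ} {x y : H} :
    (x, y) ∈ shift A lam ↔ (x, y + lam • x) ∈ A := by
  constructor
  · rintro ⟨⟨a, b⟩, hab, h⟩
    obtain ⟨rfl, rfl⟩ := h
    simpa using hab
  · intro h
    exact ⟨_, h, by simp⟩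

lemma shift_zero (A : LinRel H) : shift A 0 = A := by
  ext ⟨x, y⟩
  simp [mem_shift]

lemma mem_pow_zero {A : LinRel H} {x y : H} : (x, y) ∈ pow A 0 ↔ y = x := by
  simp [pow, idRel, LinearMap.mem_graph_iff]

lemma mem_pow_succ {A : LinRel H} {k : ℕ} {x y : H} :
    (x, y) ∈ pow A (k + 1) ↔ ∃ z, (x, z) ∈ pow A k ∧ (z, y) ∈ A := Iff.rfl

/-- The inclusion `Aᵏ A ⊆ A Aᵏ`, which allows a chain to be prolonged at its start. -/
lemma pow_succ_of_left {A : LinRel H} {k : ℕ} {x y z : H} (h : (x, z) ∈ A)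
    (hz : (z, y) ∈ pow A k) : (x, y) ∈ pow A (k + 1) := by
  induction k generalizing y with
  | zero =>
    rw [mem_pow_zero] at hz
    subst hz
    exact ⟨x, mem_pow_zero.2 rfl, h⟩
  | succ k ih =>
    obtain ⟨w, hw, hwy⟩ := hz
    exact ⟨w, ih hw, hwy⟩

lemma mem_rootSpace {A : LinRel H} {lam : ℂ} {x : H} :
    x ∈ rootSpace A lam ↔ ∃ i, (x, (0 : H)) ∈ pow (shift A lam) (i + 1) := by
  change x ∈ (⋃ i : ℕ, (ker (pow (shift A lam) (i+1)) : Set H)) ↔ _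
  simp [mem_ker]

lemma mem_rootInf {A : LinRel H} {y : H} :
    y ∈ rootInf A ↔ ∃ i, ((0 : H), y) ∈ pow A (i + 1) := by
  change y ∈ (⋃ i : ℕ, (mul (pow A (i+1)) : Set H)) ↔ _
  simp [mem_mul]

lemma rootInf_forward {A : LinRel H} {x y : H} (h : (x, y) ∈ A) (hx : x ∈ rootInf A) :
    y ∈ rootInf A := by
  obtain ⟨i, hi⟩ := mem_rootInf.1 hx
  exact mem_rootInf.2 ⟨i + 1, x, hi, h⟩

lemma rootSpace_zero_backward {A : LinRel H} {x y : H} (h : (x, y) ∈ A)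
    (hy : y ∈ rootSpace A 0) : x ∈ rootSpace A 0 := by
  obtain ⟨i, hi⟩ := mem_rootSpace.1 hy
  refine mem_rootSpace.2 ⟨i + 1, pow_succ_of_left ?_ hi⟩
  rwa [shift_zero]

/-- Over a field, `g` factors through `f` as soon as `ker f ≤ ker g`; the factor is extended
arbitrarily from the range of `f` to the whole space. -/
lemma exists_factor {E V : Type*} [AddCommGroup E] [Module ℂ E] [AddCommGroup V] [Module ℂ V]
    (f g : E →ₗ[ℂ] V) (h : ∀ e, f e = 0 → g e = 0) :
    ∃ T : Module.End ℂ V, ∀ e, T (f e) = g e := by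
  obtain ⟨s, hs⟩ := f.rangeRestrict.exists_rightInverse_of_surjective f.range_rangeRestrict
  obtain ⟨T, hT⟩ := LinearMap.exists_extend (g ∘ₗ s)
  refine ⟨T, fun e => ?_⟩
  have h1 : T (f e) = g (s (f.rangeRestrict e)) := LinearMap.congr_fun hT (f.rangeRestrict e)
  have h2 : f (s (f.rangeRestrict e)) = f e :=
    congrArg Subtype.val (LinearMap.congr_fun hs (f.rangeRestrict e))
  rw [h1, ← sub_eq_zero, ← map_sub]
  exact h _ (by rw [map_sub, h2, sub_self])

/-- The operator induced by `A` on the quotient by a forward-invariant subspace. -/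
lemma exists_forward (A : LinRel H) (W : Submodule ℂ H)
    (h : ∀ x y, (x, y) ∈ A → x ∈ W → y ∈ W) :
    ∃ T : Module.End ℂ (H ⧸ W), ∀ x y, (x, y) ∈ A → T (W.mkQ x) = W.mkQ y := by
  obtain ⟨T, hT⟩ := exists_factor (W.mkQ ∘ₗ LinearMap.fst ℂ H H ∘ₗ A.subtype)
    (W.mkQ ∘ₗ LinearMap.snd ℂ H H ∘ₗ A.subtype) (fun e he => by
      simp only [LinearMap.comp_apply, Submodule.mkQ_apply, Submodule.Quotient.mk_eq_zero] at he ⊢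
      exact h _ _ e.2 he)
  exact ⟨T, fun x y hxy => hT ⟨(x, y), hxy⟩⟩

/-- The operator induced by `A⁻¹` on the quotient by a backward-invariant subspace. -/
lemma exists_backward (A : LinRel H) (W : Submodule ℂ H)
    (h : ∀ x y, (x, y) ∈ A → y ∈ W → x ∈ W) :
    ∃ S : Module.End ℂ (H ⧸ W), ∀ x y, (x, y) ∈ A → S (W.mkQ y) = W.mkQ x := by
  obtain ⟨S, hS⟩ := exists_factor (W.mkQ ∘ₗ LinearMap.snd ℂ H H ∘ₗ A.subtype)
    (W.mkQ ∘ₗ LinearMap.fst ℂ H H ∘ₗ A.subtype) (fun e he => by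
      simp only [LinearMap.comp_apply, Submodule.mkQ_apply, Submodule.Quotient.mk_eq_zero] at he ⊢
      exact h _ _ e.2 he)
  exact ⟨S, fun x y hxy => hS ⟨(x, y), hxy⟩⟩

variable {W : Submodule ℂ H}

lemma forward_pow_shift {A : LinRel H} {T : Module.End ℂ (H ⧸ W)}
    (hT : ∀ x y, (x, y) ∈ A → T (W.mkQ x) = W.mkQ y) (lam : ℂ) {k : ℕ} {x y : H}
    (h : (x, y) ∈ pow (shift A lam) k) : ((T - lam • 1) ^ k) (W.mkQ x) = W.mkQ y := by
  induction k generalizing y with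
  | zero => rw [mem_pow_zero.1 h]; rfl
  | succ k ih =>
    obtain ⟨z, hz, hzy⟩ := h
    rw [pow_succ', Module.End.mul_apply, ih hz, LinearMap.sub_apply, hT _ _ (mem_shift.1 hzy)]
    simp only [map_add, map_smul, LinearMap.smul_apply, Module.End.one_apply, add_sub_cancel_right]

lemma backward_pow {A : LinRel H} {S : Module.End ℂ (H ⧸ W)}
    (hS : ∀ x y, (x, y) ∈ A → S (W.mkQ y) = W.mkQ x) {k : ℕ} {x y : H}
    (h : (x, y) ∈ pow A k) : (S ^ k) (W.mkQ y) = W.mkQ x := by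
  induction k generalizing y with
  | zero => rw [mem_pow_zero.1 h]; rfl
  | succ k ih =>
    obtain ⟨z, hz, hzy⟩ := h
    rw [pow_succ, Module.End.mul_apply, hS _ _ hzy, ih hz]

/-- One step `(z, y + λ z) ∈ A` of a chain at `λ` reads `(1 - λ S) [z] = S [y]`. -/
lemma backward_pow_shift {A : LinRel H} {S : Module.End ℂ (H ⧸ W)}
    (hS : ∀ x y, (x, y) ∈ A → S (W.mkQ y) = W.mkQ x) (lam : ℂ) {k : ℕ} {x y : H}
    (h : (x, y) ∈ pow (shift A lam) k) :
    ((1 - lam • S) ^ k) (W.mkQ x) = (S ^ k) (W.mkQ y) := by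
  induction k generalizing y with
  | zero => rw [mem_pow_zero.1 h]; rfl
  | succ k ih =>
    obtain ⟨z, hz, hzy⟩ := h
    have hstep : (1 - lam • S) (W.mkQ z) = S (W.mkQ y) := by
      have h1 := hS _ _ (mem_shift.1 hzy)
      rw [map_add, map_smul, map_add, map_smul] at h1
      rw [LinearMap.sub_apply, Module.End.one_apply, LinearMap.smul_apply, sub_eq_iff_eq_add, h1]
    have hcomm : Commute (1 - lam • S) (S ^ k) :=
      ((Commute.one_left S).sub_left ((Commute.refl S).smul_left lam)).pow_right k
    rw [pow_succ', Module.End.mul_apply, ih hz, ← Module.End.mul_apply, hcomm.eq,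
      Module.End.mul_apply, hstep, pow_succ, Module.End.mul_apply]

lemma mem_rootInf_of_sum_mem (A : LinRel H) {l : ℕ} {lam : Fin l → ℂ}
    (hdist : Function.Injective lam) {x : Fin l → H}
    (hx : ∀ r, x r ∈ rootSpace A (lam r)) (hsum : ∑ r, x r ∈ rootInf A) (r : Fin l) :
    x r ∈ rootInf A := by
  obtain ⟨T, hT⟩ := exists_forward A (rootInf A) fun _ _ => rootInf_forward
  have hind := T.independent_maxGenEigenspace.comp hdist
  have hgen : ∀ i, (rootInf A).mkQ (x i) ∈ T.maxGenEigenspace (lam i) := by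
    intro i
    obtain ⟨k, hk⟩ := mem_rootSpace.1 (hx i)
    refine (Module.End.mem_maxGenEigenspace _ _ _).2 ⟨k + 1, ?_⟩
    rw [forward_pow_shift hT _ hk, map_zero]
  have hzero : ∑ i, (rootInf A).mkQ (x i) = 0 := by
    rw [← map_sum, Submodule.mkQ_apply, Submodule.Quotient.mk_eq_zero]
    exact hsum
  have := (iSupIndep_iff_finsetSum_eq_zero_imp_eq_zero _).1 hind Finset.univ
    (fun i => (rootInf A).mkQ (x i)) (fun i _ => hgen i) hzero r (Finset.mem_univ r)
  rwa [Submodule.mkQ_apply, Submodule.Quotient.mk_eq_zero] at this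

lemma mem_rootSpace_zero (A : LinRel H) {lam : ℂ} {x : H} (hx : x ∈ rootSpace A lam)
    (hinf : x ∈ rootInf A) : x ∈ rootSpace A 0 := by
  rcases eq_or_ne lam 0 with rfl | hlam
  · exact hx
  obtain ⟨S, hS⟩ := exists_backward A (rootSpace A 0) fun _ _ => rootSpace_zero_backward
  obtain ⟨m, hm⟩ := mem_rootInf.1 hinf
  obtain ⟨n, hn⟩ := mem_rootSpace.1 hx
  have h0 : (rootSpace A 0).mkQ x ∈ S.maxGenEigenspace 0 := by
    refine (Module.End.mem_maxGenEigenspace _ _ _).2 ⟨m + 1, ?_⟩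
    rw [zero_smul, sub_zero, backward_pow hS hm, map_zero]
  have h1 : (rootSpace A 0).mkQ x ∈ S.maxGenEigenspace lam⁻¹ := by
    refine (Module.End.mem_maxGenEigenspace _ _ _).2 ⟨n + 1, ?_⟩
    have hS' : S - lam⁻¹ • 1 = (-lam⁻¹) • (1 - lam • S) := by
      rw [smul_sub, smul_smul, neg_mul, inv_mul_cancel₀ hlam, neg_smul, neg_smul, one_smul]
      abel
    rw [hS', smul_pow, LinearMap.smul_apply, backward_pow_shift hS lam hn, map_zero, map_zero,
      smul_zero]
  have hdisj := S.independent_maxGenEigenspace.pairwiseDisjoint (inv_ne_zero hlam).symm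
  have := Submodule.disjoint_def.1 hdisj _ h0 h1
  rwa [Submodule.mkQ_apply, Submodule.Quotient.mk_eq_zero] at this

end LinRel

/-- if `x^r ∈ R_{λ_r}(A)` for pairwise distinct `λ_1, …, λ_l ∈ ℂ`
and `∑ x^r ∈ R_∞(A)`, then every `x^r ∈ R_c(A)`. -/
theorem statement_11 (A : LinRel H) (l : ℕ) (lam : Fin l → ℂ)
    (hdist : Function.Injective lam) (x : Fin l → H)
    (hx : ∀ r, x r ∈ LinRel.rootSpace A (lam r))
    (hsum : ∑ r, x r ∈ LinRel.rootInf A) :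
    ∀ r, x r ∈ LinRel.singChain A := by
  intro r
  have hinf := LinRel.mem_rootInf_of_sum_mem A hdist hx hsum r
  exact ⟨LinRel.mem_rootSpace_zero A (hx r) hinf, hinf⟩
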